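/- Every exact-repair regenerating code with parameters (n,k,d) = (4,3,3) and secondary parameters (B,α,β) satisfies 3B ≤ 4α + 6β (equivalently, 3B ≤ 2B_1 + B_2 − β). -/

import Mathlib

open Finset

/-- Shannon entropy (base 2) of a finitely-valued random variable `X` on a finite
probability space with mass function `P`. -/
noncomputable def entH {Ω S : Type*} [Fintype Ω] (P : Ω → ℝ) (X : Ω → S) : ℝ :=
  letI := Classical.decEq S
  ∑ s ∈ Finset.univ.image X,
    -((∑ ω ∈ Finset.univ.filter (fun ω => X ω = s), P ω) *
       Real.logb 2 (∑ ω ∈ Finset.univ.filter (fun ω => X ω = s), P ω))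

/-- Conditional entropy `H(X | Y) = H(X, Y) - H(Y)`. -/
noncomputable def condH {Ω S T : Type*} [Fintype Ω] (P : Ω → ℝ) (X : Ω → S) (Y : Ω → T) : ℝ :=
  entH P (fun ω => (X ω, Y ω)) - entH P Y

/-- The joint random variable `W_J = (W_j : j ∈ J)`. -/
def jointW {Ω : Type*} {n : ℕ} {σW : Fin n → Type*} (W : ∀ j, Ω → σW j)
    (J : Finset (Fin n)) : Ω → ∀ j : J, σW j.1 :=
  fun ω j => W j.1 ω

/-- The joint random variable `(S_i^j : (i,j) ∈ E)` for a set `E` of pairs. -/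
def jointS {Ω : Type*} {n : ℕ} {σS : Fin n → Fin n → Type*} (S : ∀ i j, Ω → σS i j)
    (E : Finset (Fin n × Fin n)) : Ω → ∀ e : E, σS e.1.1 e.1.2 :=
  fun ω e => S e.1.1 e.1.2 ω

/-- The joint random variable `S_I^j = (S_i^j : i ∈ I)`. -/
def jointSto {Ω : Type*} {n : ℕ} {σS : Fin n → Fin n → Type*} (S : ∀ i j, Ω → σS i j)
    (I : Finset (Fin n)) (j : Fin n) : Ω → ∀ i : I, σS i.1 j :=
  fun ω i => S i.1 j ω

/-- An exact-repair regenerating code with parameters `(n,k,d)` (with `1 ≤ k ≤ d ≤ n-1`)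
and secondary parameters `(B,α,β)`: the file `M`, the stored data `W j` on server `j`
(servers indexed by `Fin n`, server `j` of the paper being index `j-1`), and the helper
information `S i j` sent from server `i` to repair server `j`. -/
structure IsRegenCode {Ω : Type*} [Fintype Ω] (n k d : ℕ) (B α β : ℝ) (P : Ω → ℝ)
    {σM : Type*} {σW : Fin n → Type*} {σS : Fin n → Fin n → Type*}
    (M : Ω → σM) (W : ∀ j, Ω → σW j) (S : ∀ i j, Ω → σS i j) : Prop where
  prob_nonneg : ∀ ω, 0 ≤ P ω
  prob_sum : ∑ ω, P ω = 1
  hk : 1 ≤ k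
  hkd : k ≤ d
  hdn : d + 1 ≤ n
  hB : 0 ≤ B
  hα : 0 ≤ α
  hβ : 0 ≤ β
  hMB : entH P M = B
  hWα : ∀ j, entH P (W j) = α
  hWM : ∀ j, condH P (W j) M = 0
  hMW : ∀ J : Finset (Fin n), k ≤ J.card → condH P M (jointW W J) = 0
  hSβ : ∀ i j, i ≠ j → entH P (S i j) = β
  hSW : ∀ i j, i ≠ j → condH P (S i j) (W i) = 0
  hWS : ∀ (j : Fin n) (I : Finset (Fin n)), d ≤ I.card → j ∉ I →
    condH P (W j) (jointSto S I j) = 0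

/-- `B_q = qα + ((k-q)(k-q-1)/2)β + (d+1-k)(k-q)β`. -/
noncomputable def Bfun (k d q : ℕ) (α β : ℝ) : ℝ :=
  (q : ℝ) * α + (((k - q) * (k - q - 1) : ℕ) : ℝ) / 2 * β
    + (((d + 1 - k) * (k - q) : ℕ) : ℝ) * β

/-!
On the support of the probability measure a random variable is a partition. "`X` is determined
by `Y`" becomes "the partition of `Y` refines that of `X`", joint variables become infima, and
entropy becomes a strictly antitone submodular function on the lattice of partitions: equality of
entropies of comparable partitions forces them to agree, so vanishing conditional entropy is the
same as refinement.

The bound is then lattice-theoretic: four applications of submodularity, three of them to a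
pair of collections that jointly determine the file, give
`3B + H(E(a,b,c)) ≤ 4α + 6β + H(E(c,a,b))` for a collection `E(a,b,c)` of helper messages
attached to three servers. Summing over the three rotations of `(a,b,c)` cancels the terms in `E`.
-/

section PartitionEntropy

variable {Ω : Type*} [Fintype Ω] {p : Ω → ℝ}

open Classical in
/-- The total `p`-mass of the block of `ω` in the partition of `Ω` given by `r`. -/
noncomputable def blockMass (p : Ω → ℝ) (r : Setoid Ω) (ω : Ω) : ℝ :=
  ∑ ω' with r ω ω', p ω'

/-- The Shannon entropy (base 2) of the partition of `Ω` given by `r`, as the expected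
information content of the block of a random point. -/
noncomputable def partitionEntropy (p : Ω → ℝ) (r : Setoid Ω) : ℝ :=
  -∑ ω, p ω * Real.logb 2 (blockMass p r ω)

theorem blockMass_congr {r : Setoid Ω} {x y : Ω} (hxy : r x y) :
    blockMass p r x = blockMass p r y := by
  classical
  exact sum_congr (filter_congr fun _ _ => ⟨r.trans' (r.symm' hxy), r.trans' hxy⟩)
    fun _ _ => rfl

theorem blockMass_mono (hp : ∀ ω, 0 ≤ p ω) {r s : Setoid Ω} (hrs : r ≤ s) (ω : Ω) :
    blockMass p r ω ≤ blockMass p s ω := by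
  classical
  exact sum_le_sum_of_subset_of_nonneg
    (monotone_filter_right _ fun _ _ h => hrs h) fun z _ _ => hp z

theorem blockMass_lt_blockMass (hp : ∀ ω, 0 < p ω) {r s : Setoid Ω} (hrs : r ≤ s) {x y : Ω}
    (hs : s x y) (hr : ¬ r x y) : blockMass p r x < blockMass p s x := by
  classical
  exact sum_lt_sum_of_subset (monotone_filter_right _ fun _ _ h => hrs h)
    (by simpa using hs) (by simpa using hr) (hp y) fun z _ _ => (hp z).le

theorem blockMass_pos (hp : ∀ ω, 0 < p ω) (r : Setoid Ω) (ω : Ω) : 0 < blockMass p r ω :=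
  sum_pos (fun z _ => hp z) ⟨ω, by simp⟩

theorem partitionEntropy_strictAnti (hp : ∀ ω, 0 < p ω) : StrictAnti (partitionEntropy p) := by
  intro r s hrs
  obtain ⟨x, y, hs, hr⟩ : ∃ x y, s x y ∧ ¬ r x y := by
    simpa [Setoid.le_def] using hrs.not_ge
  refine neg_lt_neg (sum_lt_sum (fun ω _ => ?_) ⟨x, mem_univ x, ?_⟩)
  · exact mul_le_mul_of_nonneg_left (Real.logb_le_logb_of_le one_lt_two (blockMass_pos hp r ω)
      (blockMass_mono (fun z => (hp z).le) hrs.le ω)) (hp ω).le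
  · exact mul_lt_mul_of_pos_left (Real.logb_lt_logb one_lt_two (blockMass_pos hp r x)
      (blockMass_lt_blockMass hp hrs.le hs hr)) (hp x)

theorem partitionEntropy_top (hp : ∑ ω, p ω = 1) : partitionEntropy p ⊤ = 0 := by
  simp [partitionEntropy, blockMass, Setoid.top_def, hp]

theorem sum_mul_logb_nonpos {b : ℝ} (hb : 1 < b) (hp : ∀ ω, 0 ≤ p ω) {f : Ω → ℝ}
    (hf : ∀ ω, 0 < f ω) (hpf : ∑ ω, p ω * f ω ≤ ∑ ω, p ω) :
    ∑ ω, p ω * Real.logb b (f ω) ≤ 0 := by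
  have hlog : ∑ ω, p ω * Real.log (f ω) ≤ 0 := calc
    ∑ ω, p ω * Real.log (f ω) ≤ ∑ ω, p ω * (f ω - 1) := sum_le_sum fun ω _ =>
      mul_le_mul_of_nonneg_left (Real.log_le_sub_one_of_pos (hf ω)) (hp ω)
    _ = ∑ ω, p ω * f ω - ∑ ω, p ω := by simp only [mul_sub, mul_one, sum_sub_distrib]
    _ ≤ 0 := sub_nonpos.2 hpf
  simp only [Real.logb, ← mul_div_assoc, ← sum_div]
  exact div_nonpos_of_nonpos_of_nonneg hlog (Real.log_pos hb).le

open Classical in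
theorem sum_div_blockMass_inf_le_one (r s : Setoid Ω) (x y : Ω) :
    ∑ z with r x z ∧ s y z, p z / blockMass p (r ⊓ s) z ≤ 1 := by
  -- An `r`-block and an `s`-block are either disjoint or meet in a single block of `r ⊓ s`.
  by_cases hmeet : ∃ z, r x z ∧ s y z
  · obtain ⟨z₀, hx, hy⟩ := hmeet
    have hblock : ∀ z, r x z ∧ s y z ↔ (r ⊓ s) z₀ z := fun z =>
      ⟨fun h => ⟨r.trans' (r.symm' hx) h.1, s.trans' (s.symm' hy) h.2⟩,
        fun h => ⟨r.trans' hx h.1, s.trans' hy h.2⟩⟩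
    calc
      ∑ z with r x z ∧ s y z, p z / blockMass p (r ⊓ s) z
      _ = ∑ z with (r ⊓ s) z₀ z, p z / blockMass p (r ⊓ s) z₀ :=
        sum_congr (by simp only [hblock]) fun z hz => by
          rw [blockMass_congr (mem_filter.1 hz).2]
      _ = blockMass p (r ⊓ s) z₀ / blockMass p (r ⊓ s) z₀ := (sum_div _ _ _).symm
      _ ≤ 1 := div_self_le_one _
  · rw [filter_false_of_mem fun z _ hz => hmeet ⟨z, hz⟩, sum_empty]
    exact zero_le_one

open Classical in
theorem sum_mul_blockMass_div_inf_le (hp : ∀ ω, 0 ≤ p ω) (r s : Setoid Ω) (x : Ω) :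
    ∑ z with r x z, p z / blockMass p (r ⊓ s) z * blockMass p s z ≤ blockMass p (r ⊔ s) x := by
  calc
    ∑ z with r x z, p z / blockMass p (r ⊓ s) z * blockMass p s z
    _ = ∑ z with r x z, ∑ y with s z y, p z / blockMass p (r ⊓ s) z * p y := by
      simp only [blockMass, mul_sum]
    _ = ∑ y with (r ⊔ s) x y, ∑ z with r x z ∧ s y z, p z / blockMass p (r ⊓ s) z * p y := by
      refine sum_comm' fun z y => ?_
      simp only [mem_filter_univ, s.comm' (x := z)]
      refine ⟨fun h => ⟨h, ?_⟩, And.left⟩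
      exact (r ⊔ s).trans' (le_sup_left (a := r) h.1) (le_sup_right (b := s) (s.symm' h.2))
    _ ≤ ∑ y with (r ⊔ s) x y, 1 * p y := by
      simp only [← sum_mul]
      exact sum_le_sum fun y _ =>
        mul_le_mul_of_nonneg_right (sum_div_blockMass_inf_le_one r s x y) (hp y)
    _ = blockMass p (r ⊔ s) x := by simp only [one_mul, blockMass]

open Classical in
theorem sum_mul_blockMass_mul_div_le (hp : ∀ ω, 0 < p ω) (r s : Setoid Ω) :
    ∑ ω, p ω * (blockMass p r ω * blockMass p s ω /
      (blockMass p (r ⊓ s) ω * blockMass p (r ⊔ s) ω)) ≤ ∑ ω, p ω := by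
  set g : Ω → ℝ := fun z => p z / blockMass p (r ⊓ s) z * blockMass p s z with hg
  calc
    ∑ ω, p ω * (blockMass p r ω * blockMass p s ω /
      (blockMass p (r ⊓ s) ω * blockMass p (r ⊔ s) ω))
    _ = ∑ z, ∑ x with r z x, p x / blockMass p (r ⊔ s) z * g z := by
      refine sum_congr rfl fun z _ => ?_
      rw [← sum_mul, ← sum_div, ← blockMass, hg]
      field
    _ = ∑ x, ∑ z with r x z, p x / blockMass p (r ⊔ s) x * g z := by
      rw [sum_comm' (t' := univ) (s' := fun x => univ.filter (r x))
        (by simp [r.comm'])]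
      refine sum_congr rfl fun x _ => sum_congr rfl fun z hz => ?_
      rw [blockMass_congr (le_sup_left (a := r) (mem_filter.1 hz).2)]
    _ ≤ ∑ x, p x / blockMass p (r ⊔ s) x * blockMass p (r ⊔ s) x := by
      simp only [← mul_sum]
      exact sum_le_sum fun x _ => mul_le_mul_of_nonneg_left
        (sum_mul_blockMass_div_inf_le (fun z => (hp z).le) r s x)
        (div_pos (hp x) (blockMass_pos hp _ x)).le
    _ = ∑ x, p x :=
      sum_congr rfl fun x _ => div_mul_cancel₀ _ (blockMass_pos hp _ x).ne'

theorem partitionEntropy_inf_add_sup_le (hp : ∀ ω, 0 < p ω) (r s : Setoid Ω) :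
    partitionEntropy p (r ⊓ s) + partitionEntropy p (r ⊔ s) ≤
      partitionEntropy p r + partitionEntropy p s := by
  have hpos := blockMass_pos hp
  have hgibbs := sum_mul_logb_nonpos one_lt_two (fun ω => (hp ω).le)
    (fun ω => div_pos (mul_pos (hpos r ω) (hpos s ω)) (mul_pos (hpos (r ⊓ s) ω) (hpos (r ⊔ s) ω)))
    (sum_mul_blockMass_mul_div_le hp r s)
  have hlogb : ∀ ω, Real.logb 2 (blockMass p r ω * blockMass p s ω /
      (blockMass p (r ⊓ s) ω * blockMass p (r ⊔ s) ω)) =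
      Real.logb 2 (blockMass p r ω) + Real.logb 2 (blockMass p s ω) -
        (Real.logb 2 (blockMass p (r ⊓ s) ω) + Real.logb 2 (blockMass p (r ⊔ s) ω)) := fun ω => by
    rw [Real.logb_div (mul_pos (hpos _ _) (hpos _ _)).ne' (mul_pos (hpos _ _) (hpos _ _)).ne',
      Real.logb_mul (hpos _ _).ne' (hpos _ _).ne', Real.logb_mul (hpos _ _).ne' (hpos _ _).ne']
  simp only [hlogb, mul_sub, mul_add, sum_sub_distrib, sum_add_distrib] at hgibbs
  simp only [partitionEntropy]
  linarith

end PartitionEntropy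

section SupportKer

variable {Ω S T : Type*} {P : Ω → ℝ}

/-- The partition of the support of `P` into the level sets of the random variable `X`.
Discarding null points turns almost sure determination into refinement of partitions. -/
def supportKer (P : Ω → ℝ) (X : Ω → S) : Setoid {ω // P ω ≠ 0} :=
  Setoid.ker fun ω => X ω

theorem supportKer_prodMk (X : Ω → S) (Y : Ω → T) :
    supportKer P (fun ω => (X ω, Y ω)) = supportKer P X ⊓ supportKer P Y :=
  Setoid.ext fun _ _ => Prod.mk_inj

theorem supportKer_pi {ι : Type*} {σ : ι → Type*} (X : ∀ i, Ω → σ i) (J : Finset ι) :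
    supportKer P (fun ω (i : J) => X i ω) = J.inf fun i => supportKer P (X i) := by
  refine le_antisymm (Finset.le_inf fun i hi x y h => congrFun h ⟨i, hi⟩) fun x y h => ?_
  exact funext fun i => Finset.inf_le (f := fun i => supportKer P (X i)) i.2 h

variable [Fintype Ω]

open Classical in
theorem entH_eq_neg_sum (X : Ω → S) :
    entH P X = -∑ ω, P ω * Real.logb 2 (∑ ω' with X ω' = X ω, P ω') := by
  rw [entH, ← sum_neg_distrib]
  refine sum_image' _ fun ω _ => ?_
  rw [sum_neg_distrib, sum_mul]
  exact congrArg _ (sum_congr rfl fun ω' hω' => by rw [(mem_filter.1 hω').2])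

open Classical in
theorem blockMass_supportKer (X : Ω → S) (ω : {ω // P ω ≠ 0}) :
    blockMass (fun ω : {ω // P ω ≠ 0} => P ω) (supportKer P X) ω =
      ∑ ω' with X ω' = X ω, P ω' := by
  simp only [blockMass, sum_filter]
  refine Fintype.sum_of_injective Subtype.val Subtype.val_injective _ _ (fun ω' hω' => ?_)
    fun ω' => if_congr eq_comm rfl rfl
  have : P ω' = 0 := by simpa using hω'
  simp [this]

theorem entH_eq_partitionEntropy (X : Ω → S) :
    entH P X = partitionEntropy (fun ω : {ω // P ω ≠ 0} => P ω) (supportKer P X) := by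
  classical
  rw [entH_eq_neg_sum, partitionEntropy]
  refine congrArg _ (Fintype.sum_of_injective Subtype.val Subtype.val_injective _ _
    (fun ω hω => ?_) fun ω => by rw [blockMass_supportKer]).symm
  have : P ω = 0 := by simpa using hω
  rw [this, zero_mul]

theorem supportKer_le_of_condH_eq_zero (hP : ∀ ω, 0 ≤ P ω) {X : Ω → S} {Y : Ω → T}
    (h : condH P X Y = 0) : supportKer P Y ≤ supportKer P X := by
  have hpos : ∀ ω : {ω // P ω ≠ 0}, 0 < P ω := fun ω => (hP ω).lt_of_ne' ω.2
  rw [condH, entH_eq_partitionEntropy, entH_eq_partitionEntropy, supportKer_prodMk,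
    sub_eq_zero] at h
  exact inf_eq_right.1 (inf_le_right.eq_of_not_lt fun hlt =>
    (partitionEntropy_strictAnti hpos hlt).ne' h)

end SupportKer

/-- A real function on a lattice with the properties of joint entropy that are used in
Shannon-type inequalities. Elements stand for random variables, smaller elements carry more
information, and `x ⊓ y` is the joint variable of `x` and `y`. -/
structure IsEntropyFunction {L : Type*} [Lattice L] [OrderTop L] (H : L → ℝ) : Prop where
  map_top : H ⊤ = 0
  antitone : Antitone H
  map_inf_add_map_sup_le (x y : L) : H (x ⊓ y) + H (x ⊔ y) ≤ H x + H y

theorem isEntropyFunction_partitionEntropy {Ω : Type*} [Fintype Ω] {p : Ω → ℝ}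
    (hp : ∀ ω, 0 < p ω) (hsum : ∑ ω, p ω = 1) : IsEntropyFunction (partitionEntropy p) where
  map_top := partitionEntropy_top hsum
  antitone := (partitionEntropy_strictAnti hp).antitone
  map_inf_add_map_sup_le := partitionEntropy_inf_add_sup_le hp

namespace IsEntropyFunction

variable {L : Type*} [Lattice L] [OrderTop L] {H : L → ℝ}

theorem add_le_add_of_inf_le (hH : IsEntropyFunction H) {x y u t : L} (hx : x ≤ t) (hy : y ≤ t)
    (hu : x ⊓ y ≤ u) : H u + H t ≤ H x + H y :=
  (add_le_add (hH.antitone hu) (hH.antitone (sup_le hx hy))).trans (hH.map_inf_add_map_sup_le x y)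

theorem map_inf_le_add (hH : IsEntropyFunction H) (x y : L) : H (x ⊓ y) ≤ H x + H y := by
  simpa only [hH.map_top, add_zero] using
    hH.add_le_add_of_inf_le (le_top (a := x)) (le_top (a := y)) le_rfl

end IsEntropyFunction

/-- The order-theoretic form of an exact-repair code: elements of a lattice `L` with an
entropy function `H` replace the file, the stored data `w i` and the helper messages `s i j`,
and `x ≤ y` replaces "`y` is determined by `x`". -/
structure IsRegenSystem {L : Type*} [Lattice L] [OrderTop L] (H : L → ℝ) (n k d : ℕ)
    (B α β : ℝ) (m : L) (w : Fin n → L) (s : Fin n → Fin n → L) : Prop where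
  isEntropyFunction : IsEntropyFunction H
  map_file : H m = B
  map_server (i : Fin n) : H (w i) = α
  map_helper {i j : Fin n} (hij : i ≠ j) : H (s i j) = β
  server_le_helper {i j : Fin n} (hij : i ≠ j) : w i ≤ s i j
  inf_server_le_file (J : Finset (Fin n)) (hJ : k ≤ #J) : J.inf w ≤ m
  inf_helper_le_server (j : Fin n) (I : Finset (Fin n)) (hI : d ≤ #I) (hj : j ∉ I) :
    I.inf (fun i => s i j) ≤ w j

theorem IsRegenCode.isRegenSystem {Ω : Type*} [Fintype Ω] {n k d : ℕ} {B α β : ℝ} {P : Ω → ℝ}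
    {σM : Type*} {σW : Fin n → Type*} {σS : Fin n → Fin n → Type*}
    {M : Ω → σM} {W : ∀ j, Ω → σW j} {S : ∀ i j, Ω → σS i j}
    (hcode : IsRegenCode n k d B α β P M W S) :
    IsRegenSystem (partitionEntropy fun ω : {ω // P ω ≠ 0} => P ω) n k d B α β
      (supportKer P M) (fun j => supportKer P (W j)) (fun i j => supportKer P (S i j)) where
  isEntropyFunction := by
    refine isEntropyFunction_partitionEntropy
      (fun ω => (hcode.prob_nonneg ω).lt_of_ne' ω.2) ?_
    rw [← hcode.prob_sum]
    exact Fintype.sum_of_injective Subtype.val Subtype.val_injective _ _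
      (fun ω hω => by simpa using hω) fun _ => rfl
  map_file := (entH_eq_partitionEntropy M).symm.trans hcode.hMB
  map_server i := (entH_eq_partitionEntropy (W i)).symm.trans (hcode.hWα i)
  map_helper hij := (entH_eq_partitionEntropy _).symm.trans (hcode.hSβ _ _ hij)
  server_le_helper hij := supportKer_le_of_condH_eq_zero hcode.prob_nonneg (hcode.hSW _ _ hij)
  inf_server_le_file J hJ := (supportKer_pi W J).symm.trans_le
    (supportKer_le_of_condH_eq_zero hcode.prob_nonneg (hcode.hMW J hJ))
  inf_helper_le_server j I hI hj := (supportKer_pi (fun i => S i j) I).symm.trans_le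
    (supportKer_le_of_condH_eq_zero hcode.prob_nonneg (hcode.hWS j I hI hj))

namespace IsRegenSystem

variable {L : Type*} [Lattice L] [OrderTop L] {H : L → ℝ} {n k d : ℕ} {B α β : ℝ} {m : L}
  {w : Fin n → L} {s : Fin n → Fin n → L}

/-- Everything that server `a` sends to the other servers. -/
def outgoing (s : Fin n → Fin n → L) (a : Fin n) : L :=
  (univ.erase a).inf (s a)

/-- The messages `outgoing s b` together with all messages among `a`, `b`, `c` except the one
from `a` to `c`. Not being symmetric in `a`, `b`, `c`, it only cancels after summation over
the rotations of `(a, b, c)`. -/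
def exchange (s : Fin n → Fin n → L) (a b c : Fin n) : L :=
  outgoing s b ⊓ s a b ⊓ s c a ⊓ s c b

theorem outgoing_le {a b : Fin n} (hab : a ≠ b) : outgoing s a ≤ s a b :=
  Finset.inf_le (mem_erase.2 ⟨hab.symm, mem_univ b⟩)

theorem le_outgoing (h : IsRegenSystem H n k d B α β m w s) {x : L} {a : Fin n} (hx : x ≤ w a) :
    x ≤ outgoing s a :=
  Finset.le_inf fun _ hb => hx.trans (h.server_le_helper (ne_of_mem_erase hb).symm)

theorem le_helper (h : IsRegenSystem H n k d B α β m w s) {x : L} {a b : Fin n} (hx : x ≤ w a)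
    (hab : a ≠ b) : x ≤ s a b :=
  hx.trans (h.server_le_helper hab)

theorem map_server_inf_helpers_le (h : IsRegenSystem H n k d B α β m w s) (a : Fin n)
    {b b' c c' : Fin n} (hb : b ≠ b') (hc : c ≠ c') :
    H (w a ⊓ s b b' ⊓ s c c') ≤ α + 2 * β := by
  linarith [h.isEntropyFunction.map_inf_le_add (w a ⊓ s b b') (s c c'),
    h.isEntropyFunction.map_inf_le_add (w a) (s b b'), h.map_server a, h.map_helper hb,
    h.map_helper hc]

theorem le_file (h : IsRegenSystem H n 3 d B α β m w s) {x : L} {a b c : Fin n}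
    (habc : [a, b, c].Nodup) (ha : x ≤ w a) (hb : x ≤ w b) (hc : x ≤ w c) : x ≤ m := by
  refine le_trans ?_ (h.inf_server_le_file [a, b, c].toFinset
    (List.toFinset_card_of_nodup habc).ge)
  simp [ha, hb, hc]

theorem le_server (h : IsRegenSystem H n k 3 B α β m w s) {x : L} {a b c e : Fin n}
    (hd : [a, b, c, e].Nodup) (ha : x ≤ s a e) (hb : x ≤ s b e) (hc : x ≤ s c e) : x ≤ w e := by
  have habc : [a, b, c].Nodup := by grind
  have he : e ∉ [a, b, c].toFinset := by
    simp only [List.mem_toFinset]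
    grind
  refine le_trans ?_ (h.inf_helper_le_server e [a, b, c].toFinset
    (List.toFinset_card_of_nodup habc).ge he)
  simp [ha, hb, hc]

variable {a b c e : Fin n}

theorem file_le_map_outgoing_inf_add (h : IsRegenSystem H n 3 3 B α β m w s)
    (hd : [a, b, c, e].Nodup) : B ≤ H (outgoing s a ⊓ s b a) + α := by
  set x := (outgoing s a ⊓ s b a) ⊓ (w b ⊓ s c e)
  have ha : x ≤ outgoing s a := by order
  have hb : x ≤ w b := by order
  have he : x ≤ w e := h.le_server hd (ha.trans (outgoing_le (by grind)))
    (h.le_helper hb (by grind)) (by order)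
  have hc : x ≤ w c := h.le_server (a := a) (b := b) (c := e) (by grind)
    (ha.trans (outgoing_le (by grind))) (h.le_helper hb (by grind)) (h.le_helper he (by grind))
  have hsub := h.isEntropyFunction.add_le_add_of_inf_le inf_le_right
    (h.le_helper (b := a) (inf_le_left : w b ⊓ s c e ≤ w b) (by grind))
    (h.le_file (by grind) hb hc he)
  linarith [h.map_file, h.map_helper (i := b) (j := a) (by grind),
    h.isEntropyFunction.map_inf_le_add (w b) (s c e), h.map_server b,
    h.map_helper (i := c) (j := e) (by grind)]

theorem map_inf_helper_add_map_outgoing_le (h : IsRegenSystem H n 3 3 B α β m w s)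
    (hd : [a, b, c, e].Nodup) :
    H (w a ⊓ s c b ⊓ s e b ⊓ s c a) + H (outgoing s a ⊓ s b a) ≤
      H (outgoing s a ⊓ s b a ⊓ s c a) + (α + 2 * β) := by
  set q := w a ⊓ s c b ⊓ s e b
  have ha : q ≤ w a := by order
  have hb : q ≤ w b := h.le_server (a := a) (b := c) (c := e) (by grind)
    (h.le_helper ha (by grind)) (by order) (by order)
  have hsub := h.isEntropyFunction.add_le_add_of_inf_le
    (le_inf (h.le_outgoing ha) (h.le_helper hb (by grind)))
    (inf_le_left : outgoing s a ⊓ s b a ⊓ s c a ≤ _)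
    (by order : q ⊓ (outgoing s a ⊓ s b a ⊓ s c a) ≤ q ⊓ s c a)
  linarith [h.map_server_inf_helpers_le a (b := c) (b' := b) (c := e) (c' := b)
    (by grind) (by grind)]

theorem file_add_map_exchange_le (h : IsRegenSystem H n 3 3 B α β m w s)
    (hd : [a, b, c, e].Nodup) :
    B + H (exchange s a b c) ≤ H (w a ⊓ s c b ⊓ s e b ⊓ s c a) + (α + 2 * β) := by
  set r := w a ⊓ s c b ⊓ s e b ⊓ s c a
  set t := w c ⊓ s a b ⊓ s e b
  have hra : r ≤ w a := by order
  have hrb : r ≤ w b := h.le_server (a := a) (b := c) (c := e) (by grind)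
    (h.le_helper hra (by grind)) (by order) (by order)
  have htc : t ≤ w c := by order
  have htb : t ≤ w b := h.le_server (a := a) (b := c) (c := e) (by grind) (by order)
    (h.le_helper htc (by grind)) (by order)
  have hr : r ≤ exchange s a b c := le_inf (le_inf (le_inf (h.le_outgoing hrb)
    (h.le_helper hra (by grind))) (by order)) (by order)
  have ht' : t ≤ exchange s a b c := le_inf (le_inf (le_inf (h.le_outgoing htb) (by order))
    (h.le_helper htc (by grind))) (h.le_helper htc (by grind))
  have hsub := h.isEntropyFunction.add_le_add_of_inf_le hr ht'
    (h.le_file (a := a) (b := b) (c := c) (by grind) (by order) (by order) (by order))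
  linarith [h.map_file, h.map_server_inf_helpers_le c (b := a) (b' := b) (c := e) (c' := b)
    (by grind) (by grind)]

theorem file_add_map_outgoing_inf_le (h : IsRegenSystem H n 3 3 B α β m w s)
    (hd : [a, b, c, e].Nodup) :
    B + H (outgoing s a ⊓ s b a ⊓ s c a) ≤ H (exchange s c a b) + (α + 2 * β) := by
  rw [exchange]
  set y := outgoing s a ⊓ s c a ⊓ s b c ⊓ s b a
  set t := w e ⊓ s b a ⊓ s c a
  have hte : t ≤ w e := by order
  have hta : t ≤ w a := h.le_server (a := b) (b := c) (c := e) (by grind) (by order) (by order)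
    (h.le_helper hte (by grind))
  have hya : y ≤ outgoing s a := by order
  have hc : y ⊓ t ≤ w c := h.le_server (a := a) (b := b) (c := e) (by grind)
    (inf_le_left.trans (hya.trans (outgoing_le (by grind)))) (by order)
    (h.le_helper (inf_le_right.trans hte) (by grind))
  have hto : t ≤ outgoing s a := h.le_outgoing hta
  have hsub := h.isEntropyFunction.add_le_add_of_inf_le
    (by order : y ≤ outgoing s a ⊓ s b a ⊓ s c a) (by order : t ≤ outgoing s a ⊓ s b a ⊓ s c a)
    (h.le_file (a := a) (b := c) (c := e) (by grind) (by order) hc (by order))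
  linarith [h.map_file, h.map_server_inf_helpers_le e (b := b) (b' := a) (c := c) (c' := a)
    (by grind) (by grind)]

theorem three_mul_file_add_map_exchange_le (h : IsRegenSystem H n 3 3 B α β m w s)
    (hd : [a, b, c, e].Nodup) :
    3 * B + H (exchange s a b c) ≤ 4 * α + 6 * β + H (exchange s c a b) := by
  linarith [h.file_le_map_outgoing_inf_add hd, h.map_inf_helper_add_map_outgoing_le hd,
    h.file_add_map_exchange_le hd, h.file_add_map_outgoing_inf_le hd]

theorem three_mul_file_le (h : IsRegenSystem H n 3 3 B α β m w s)
    (hd : [a, b, c, e].Nodup) : 3 * B ≤ 4 * α + 6 * β := by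
  linarith [h.three_mul_file_add_map_exchange_le (a := a) (b := b) (c := c) hd,
    h.three_mul_file_add_map_exchange_le (a := c) (b := a) (c := b) (e := e) (by grind),
    h.three_mul_file_add_map_exchange_le (a := b) (b := c) (c := a) (e := e) (by grind)]

end IsRegenSystem

theorem stmt_11_general {Ω : Type*} [Fintype Ω] {n : ℕ} {B α β : ℝ} {P : Ω → ℝ}
    {σM : Type*} {σW : Fin n → Type*} {σS : Fin n → Fin n → Type*}
    {M : Ω → σM} {W : ∀ j, Ω → σW j} {S : ∀ i j, Ω → σS i j}
    (hcode : IsRegenCode n 3 3 B α β P M W S) :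
    3 * B ≤ 4 * α + 6 * β := by
  have hn : 4 ≤ n := hcode.hdn
  exact hcode.isRegenSystem.three_mul_file_le
    (a := Fin.castLE hn 0) (b := Fin.castLE hn 1) (c := Fin.castLE hn 2) (e := Fin.castLE hn 3)
    (by simp [Fin.ext_iff])

/-- every `(4,3,3)` exact-repair code satisfies `3B ≤ 4α + 6β`. -/
theorem stmt_11 {Ω : Type*} [Fintype Ω] {B α β : ℝ} {P : Ω → ℝ}
    {σM : Type*} {σW : Fin 4 → Type*} {σS : Fin 4 → Fin 4 → Type*}
    {M : Ω → σM} {W : ∀ j, Ω → σW j} {S : ∀ i j, Ω → σS i j}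
    (hcode : IsRegenCode 4 3 3 B α β P M W S) :
    3 * B ≤ 4 * α + 6 * β :=
  stmt_11_general hcode
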